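/- Let g ≥ 5 and let S = {0} ∪ {n ∈ ℕ | n even and 4 ≤ n ≤ 2g−4} ∪ {n ∈ ℕ | n ≥ 2g−2}. Then S is a numerical semigroup of genus g with conductor c = 2g−2 (in particular S is not symmetric), W_S = (g² − 5g + 6)/2, and W_{K(S)} = (g² − 5g + 10)/2. -/

import Mathlib

/-- A numerical semigroup: `0 ∈ S`, closed under addition, finite complement. -/
def IsNumericalSemigroup (S : Set ℕ) : Prop :=
  0 ∈ S ∧ (∀ a ∈ S, ∀ b ∈ S, a + b ∈ S) ∧ (Sᶜ : Set ℕ).Finite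

/-- The genus: number of gaps. -/
noncomputable def sgGenus (T : Set ℕ) : ℕ := (Tᶜ : Set ℕ).ncard

/-- The weight `W_T = Σ gaps − binomial(g+1,2)`, as an integer. -/
noncomputable def sgWeight (T : Set ℕ) : ℤ :=
  (∑ᶠ x ∈ (Tᶜ : Set ℕ), (x : ℤ)) - ((sgGenus T + 1).choose 2 : ℤ)

/-- The conductor: least `c` with `n ∈ S` for all `n ≥ c`. -/
noncomputable def sgConductor (S : Set ℕ) : ℕ :=
  sInf {c : ℕ | ∀ n : ℕ, c ≤ n → n ∈ S}

/-- `K(S) = {a ∈ ℕ | c − 1 − a ∉ S}`, the difference computed in `ℤ`,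
no negative integer belonging to `S`. -/
def Kset (S : Set ℕ) : Set ℕ :=
  {a : ℕ | ¬ ∃ s ∈ S, (s : ℤ) = (sgConductor S : ℤ) - 1 - (a : ℤ)}

/-- `S` is symmetric if for all `0 ≤ a ≤ c−1`, `a ∈ S ↔ c−1−a ∉ S`. -/
def IsSymmetricSgp (S : Set ℕ) : Prop :=
  ∀ a : ℕ, a < sgConductor S → (a ∈ S ↔ (sgConductor S - 1 - a) ∉ S)

/-!
Reflection in `c - 1`, for `c` the conductor of `S`, exchanges the gaps of `K(S)` with the elements
of `S` below `c`. Counting and summing along it gives `g(K(S)) = c - g(S)` and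
`W_{K(S)} = W_S + (2 g(S) - c)`. A symmetric `S` equals `K(S)`, so it has `c = 2 g(S)`. It remains
to list the gaps of the given `S`: they are `2` and the odd numbers below `c = 2g - 2`.
-/

open Finset

lemma sum_range_cast_mul_two (R : Type*) [Ring R] (n : ℕ) :
    (∑ x ∈ range n, (x : R)) * 2 = n * (n - 1) := by
  rw [← Nat.cast_sum, ← Nat.cast_ofNat, ← Nat.cast_mul, sum_range_id_mul_two]
  cases n <;> simp

lemma sum_range_two_mul_add_one (n : ℕ) : ∑ i ∈ range n, (2 * i + 1) = n ^ 2 := by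
  induction n with
  | zero => rfl
  | succ n ih =>
    rw [sum_range_succ, ih]
    ring

section CofiniteSets

variable {S : Set ℕ}

lemma mem_of_sgConductor_le (hS : Sᶜ.Finite) {n : ℕ} (hn : sgConductor S ≤ n) : n ∈ S := by
  obtain ⟨b, hb⟩ := hS.bddAbove
  have bound_mem : b + 1 ∈ {c : ℕ | ∀ n : ℕ, c ≤ n → n ∈ S} := fun n hn => by
    by_contra hnS
    exact absurd (hb hnS) (by omega)
  exact Nat.sInf_mem ⟨b + 1, bound_mem⟩ n hn

lemma lt_sgConductor_of_notMem (hS : Sᶜ.Finite) {n : ℕ} (hn : n ∉ S) : n < sgConductor S :=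
  lt_of_not_ge fun hle => hn (mem_of_sgConductor_le hS hle)

lemma sgConductor_eq_succ {m : ℕ} (hm : m ∉ S) (hS : ∀ n, m < n → n ∈ S) :
    sgConductor S = m + 1 := by
  refine IsLeast.csInf_eq ⟨hS, fun c hc => ?_⟩
  by_contra! hlt
  exact hm (hc m (by omega))

lemma notMem_Kset_iff {a : ℕ} :
    a ∉ Kset S ↔ a < sgConductor S ∧ sgConductor S - 1 - a ∈ S := by
  simp only [Kset, Set.mem_ofPred_eq, not_not]
  constructor
  · rintro ⟨s, hs, h⟩
    obtain rfl : s = sgConductor S - 1 - a := by omega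
    exact ⟨by omega, hs⟩
  · rintro ⟨ha, hs⟩
    exact ⟨_, hs, by omega⟩

open scoped Classical in
lemma finsum_compl_Kset_add_finsum_compl {M : Type*} [AddCommMonoid M] (hS : Sᶜ.Finite)
    (f : ℕ → M) :
    ∑ᶠ x ∈ (Kset S)ᶜ, f x + ∑ᶠ x ∈ Sᶜ, f (sgConductor S - 1 - x) =
      ∑ x ∈ range (sgConductor S), f x := by
  set c := sgConductor S
  have compl_K : (Kset S)ᶜ = ↑{x ∈ range c | c - 1 - x ∈ S} := by
    ext x
    simp [notMem_Kset_iff, c]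
  have compl_S : Sᶜ = ↑{x ∈ range c | x ∉ S} := by
    ext x
    simpa using lt_sgConductor_of_notMem hS
  have reflect : ∑ x ∈ range c with x ∉ S, f (c - 1 - x) =
      ∑ x ∈ range c with c - 1 - x ∉ S, f x := by
    rw [sum_filter, sum_filter, ← sum_range_reflect]
    refine sum_congr rfl fun x hx => ?_
    rw [mem_range] at hx
    rw [show c - 1 - (c - 1 - x) = x by omega]
  rw [compl_K, compl_S, finsum_mem_coe_finset, finsum_mem_coe_finset, reflect,
    sum_filter_add_sum_filter_not]

lemma sgGenus_Kset_add_sgGenus (hS : Sᶜ.Finite) :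
    sgGenus (Kset S) + sgGenus S = sgConductor S := by
  have h := finsum_compl_Kset_add_finsum_compl hS fun _ => 1
  rwa [finsum_one, finsum_one, ← card_eq_sum_ones, card_range] at h

lemma two_mul_sgWeight (T : Set ℕ) :
    2 * sgWeight T = 2 * ∑ᶠ x ∈ Tᶜ, (x : ℤ) - (sgGenus T + 1) * sgGenus T := by
  have hchoose := Nat.add_one_mul_choose_eq (sgGenus T) 1
  rw [Nat.choose_one_right] at hchoose
  zify at hchoose
  rw [sgWeight]
  linear_combination hchoose

lemma finsum_compl_reflect_add_finsum_compl (hS : Sᶜ.Finite) :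
    ∑ᶠ x ∈ Sᶜ, ((sgConductor S - 1 - x : ℕ) : ℤ) + ∑ᶠ x ∈ Sᶜ, (x : ℤ) =
      sgGenus S * (sgConductor S - 1) := by
  have summand_eq : ∀ x ∈ hS.toFinset,
      ((sgConductor S - 1 - x : ℕ) : ℤ) + x = sgConductor S - 1 := fun x hx => by
    have := lt_sgConductor_of_notMem hS (hS.mem_toFinset.1 hx)
    omega
  rw [finsum_mem_eq_finite_toFinset_sum _ hS, finsum_mem_eq_finite_toFinset_sum _ hS,
    ← sum_add_distrib, sum_congr rfl summand_eq, sum_const, nsmul_eq_mul, sgGenus,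
    Set.ncard_eq_toFinset_card _ hS]

theorem sgWeight_Kset (hS : Sᶜ.Finite) :
    sgWeight (Kset S) = sgWeight S + (2 * sgGenus S - sgConductor S) := by
  have genus_K : (sgGenus (Kset S) : ℤ) + sgGenus S = sgConductor S :=
    mod_cast sgGenus_Kset_add_sgGenus hS
  have gaps_K := finsum_compl_Kset_add_finsum_compl hS fun x => (x : ℤ)
  have gaps_S := finsum_compl_reflect_add_finsum_compl hS
  have sum_below := sum_range_cast_mul_two ℤ (sgConductor S)
  have weight_K := two_mul_sgWeight (Kset S)
  have weight_S := two_mul_sgWeight S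
  rw [eq_sub_of_add_eq genus_K] at weight_K
  linarith

lemma IsSymmetricSgp.Kset_eq (hsymm : IsSymmetricSgp S) (hS : Sᶜ.Finite) : Kset S = S := by
  ext a
  rw [← not_iff_not, notMem_Kset_iff]
  by_cases ha : a < sgConductor S
  · have := hsymm a ha
    tauto
  · have := mem_of_sgConductor_le hS (not_lt.1 ha)
    tauto

theorem IsSymmetricSgp.sgConductor_eq (hsymm : IsSymmetricSgp S) (hS : Sᶜ.Finite) :
    sgConductor S = 2 * sgGenus S := by
  rw [← sgGenus_Kset_add_sgGenus hS, hsymm.Kset_eq hS, two_mul]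

end CofiniteSets

/-- The semigroup of the example, indexed by `g`. From `g = 3` on, the truncated subtractions are
harmless and `g` is its genus. -/
def biellipticSgp (g : ℕ) : Set ℕ :=
  {0} ∪ {n : ℕ | Even n ∧ 4 ≤ n ∧ n ≤ 2 * g - 4} ∪ {n : ℕ | 2 * g - 2 ≤ n}

section BiellipticSgp

variable {g : ℕ}

lemma mem_biellipticSgp {n : ℕ} :
    n ∈ biellipticSgp g ↔ n = 0 ∨ (n % 2 = 0 ∧ 4 ≤ n ∧ n ≤ 2 * g - 4) ∨ 2 * g - 2 ≤ n := by
  simp [biellipticSgp, Nat.even_iff, or_assoc]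

lemma compl_biellipticSgp (hg : 3 ≤ g) :
    (biellipticSgp g)ᶜ = ↑(insert 2 ((range (g - 1)).image fun i => 2 * i + 1)) := by
  ext n
  simp only [Set.mem_compl_iff, mem_biellipticSgp, coe_insert, coe_image, Set.mem_insert_iff,
    Set.mem_image, mem_coe, mem_range]
  constructor
  · intro hn
    by_cases h2 : n = 2
    · exact .inl h2
    · exact .inr ⟨n / 2, by omega, by omega⟩
  · rintro (rfl | ⟨i, hi, rfl⟩) <;> omega

lemma finsum_compl_biellipticSgp {M : Type*} [AddCommMonoid M] (hg : 3 ≤ g) (f : ℕ → M) :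
    ∑ᶠ x ∈ (biellipticSgp g)ᶜ, f x = f 2 + ∑ i ∈ range (g - 1), f (2 * i + 1) := by
  have two_even : 2 ∉ (range (g - 1)).image fun i => 2 * i + 1 := by
    simp only [mem_image, not_exists]
    omega
  rw [compl_biellipticSgp hg, finsum_mem_coe_finset, sum_insert two_even,
    sum_image fun a _ b _ h => by simpa using h]

lemma isNumericalSemigroup_biellipticSgp (g : ℕ) : IsNumericalSemigroup (biellipticSgp g) := by
  refine ⟨mem_biellipticSgp.2 (.inl rfl), fun a ha b hb => ?_, ?_⟩
  · rw [mem_biellipticSgp] at ha hb ⊢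
    omega
  · refine (Set.finite_Iio (2 * g - 2)).subset fun n hn => ?_
    by_contra! hle
    exact hn (mem_biellipticSgp.2 (.inr (.inr (not_lt.1 hle))))

lemma sgGenus_biellipticSgp (hg : 3 ≤ g) : sgGenus (biellipticSgp g) = g := by
  rw [sgGenus, ← finsum_one, finsum_compl_biellipticSgp hg, sum_const, card_range, smul_eq_mul]
  omega

lemma sgConductor_biellipticSgp (hg : 2 ≤ g) : sgConductor (biellipticSgp g) = 2 * g - 2 := by
  rw [sgConductor_eq_succ (m := 2 * g - 3)]
  · omega
  · rw [mem_biellipticSgp]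
    omega
  · intro n hn
    rw [mem_biellipticSgp]
    omega

lemma two_mul_sgWeight_biellipticSgp (hg : 3 ≤ g) :
    2 * sgWeight (biellipticSgp g) = (g : ℤ) ^ 2 - 5 * g + 6 := by
  rw [two_mul_sgWeight, sgGenus_biellipticSgp hg, finsum_compl_biellipticSgp hg, ← Nat.cast_sum,
    sum_range_two_mul_add_one]
  push_cast [Nat.cast_sub (show 1 ≤ g by omega)]
  ring

lemma sgWeight_Kset_biellipticSgp (hg : 3 ≤ g) :
    sgWeight (Kset (biellipticSgp g)) = sgWeight (biellipticSgp g) + 2 := by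
  rw [sgWeight_Kset (isNumericalSemigroup_biellipticSgp g).2.2, sgGenus_biellipticSgp hg,
    sgConductor_biellipticSgp (by omega)]
  omega

lemma not_isSymmetricSgp_biellipticSgp (hg : 3 ≤ g) : ¬ IsSymmetricSgp (biellipticSgp g) := by
  intro hsymm
  have h := hsymm.sgConductor_eq (isNumericalSemigroup_biellipticSgp g).2.2
  rw [sgGenus_biellipticSgp hg, sgConductor_biellipticSgp (by omega)] at h
  omega

end BiellipticSgp

/-- for `g ≥ 5`, the set
`S = {0} ∪ {even n | 4 ≤ n ≤ 2g−4} ∪ {n | n ≥ 2g−2}` is a numerical semigroup of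
genus `g` with conductor `2g−2` (in particular not symmetric),
`W_S = (g²−5g+6)/2`, and `W_{K(S)} = (g²−5g+10)/2`. -/
theorem nonsymmetric_bielliptic_example (g : ℕ) (hg : 5 ≤ g) (S : Set ℕ)
    (hSdef : S = {0} ∪ {n : ℕ | Even n ∧ 4 ≤ n ∧ n ≤ 2 * g - 4}
      ∪ {n : ℕ | 2 * g - 2 ≤ n}) :
    IsNumericalSemigroup S ∧ sgGenus S = g ∧ sgConductor S = 2 * g - 2 ∧
      ¬ IsSymmetricSgp S ∧
      sgWeight S = ((g : ℤ) ^ 2 - 5 * (g : ℤ) + 6) / 2 ∧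
      sgWeight (Kset S) = ((g : ℤ) ^ 2 - 5 * (g : ℤ) + 10) / 2 := by
  obtain rfl : S = biellipticSgp g := hSdef
  have h3 : 3 ≤ g := by omega
  have weight_S := two_mul_sgWeight_biellipticSgp h3
  have weight_K := sgWeight_Kset_biellipticSgp h3
  exact ⟨isNumericalSemigroup_biellipticSgp g, sgGenus_biellipticSgp h3,
    sgConductor_biellipticSgp (by omega), not_isSymmetricSgp_biellipticSgp h3,
    by omega, by omega⟩
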